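/- There are constants C_k > 0 and c > 0 depending only on k with the following property. Let k ≥ 3, let H be a simple k-uniform hypergraph with n vertices and maximum degree Δ, suppose q ≤ 2Δ and q ≥ max{C_k·log n, 500·k³·Δ^{1/(k−1)}}, and set t₀ = ⌊n/(4k²e)⌋ and μ₁ = εq with ε = 1/(50k²). If the Glauber dynamics is started from any fixed ε-good coloring X₀ ∈ Ω, then the probability that X_{t₀} is ε-good is at least 1 − e^{−c·μ₁}. -/

import Mathlib

/-!
The proof replaces the many dependent events by one exponential supermartingale.

Fix a vertex `v` and a level `1 ≤ i ≤ k-2`, and say that an edge `e ∋ v` is at level `j` if it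
shows `j` distinct colors on `e \ {v}`. An edge at level `i` has two vertices of equal color, so
it moves up at rate at least about `2/n`; an edge moves down only if a vertex is recolored with
one of at most `k` colors, at rate at most `2k²/(nq)` as long as at least `q/2` colors are
available everywhere. Accordingly an edge at level `j` gets, with `s` steps to go, the weight
`pot i n δ s j`: `1` below level `i`, `1 - s/(2n)` at level `i`, and `(δs)^(j-i)` above it, with
`δ = 4k²/(nq)`. In a simple hypergraph the sets `e \ {v}` are disjoint, so each step affects at
most one of them, the edges decouple (`edge_drift`, `star_drift`), and the exponential of the
total weight is a supermartingale. It starts at most at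
`exp (μ₁^i (1 - s/(4n)) + k μ₁^(i-1))`, because initially `y_j ≤ μ₁^j` for all `j < k`, the case
`j = k-1` being the degree bound (`starPot_init`), and it ends at least at `exp y_i`; Markov's
inequality gives `tail_at`.

The assumption on available colors holds at tame colorings, those with `y_{w,1} ≤ q/2` for all
`w`. The supermartingale is therefore run for the chain killed on leaving the tame colorings
(`killedDist`), which is a lower bound for the true law, and the case `i = 1` of the same tail
bound shows that little mass is killed before `t₀` (`killedDist_mass`). For `t₀ ≥ 1` the ratio
`t₀/n` is bounded below in terms of `k`, so every tail is at most `exp (-βμ₁)` with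
`β = 1/(192k²)`, and the union bound over times, vertices and levels costs a factor at most `n³`,
absorbed by `q ≥ C log n`.
-/


open Finset

noncomputable section
open Classical

variable {V : Type} [Fintype V] [DecidableEq V]

/-- The set of proper `q`-colorings: no edge is monochromatic. -/
def properColorings (E : Finset (Finset V)) (q : ℕ) : Finset (V → Fin q) :=
  Finset.univ.filter (fun X => ∀ e ∈ E, ∃ u ∈ e, ∃ w ∈ e, X u ≠ X w)

/-- `yCount E X v i` is the number of edges `e ∋ v` on which `X` takes exactly `i`
distinct values on `e \ {v}`. -/
def yCount (E : Finset (Finset V)) {q : ℕ} (X : V → Fin q) (v : V) (i : ℕ) : ℕ :=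
  (E.filter (fun e => v ∈ e ∧ ((e.erase v).image X).card = i)).card

/-- `X` is `ε`-bad at `v` if `y_{v,i,X} ≥ (εq)^i` for some `1 ≤ i ≤ k-2`. -/
def epsBadAt (E : Finset (Finset V)) (k : ℕ) {q : ℕ} (ε : ℝ) (X : V → Fin q) (v : V) : Prop :=
  ∃ i : ℕ, 1 ≤ i ∧ i ≤ k - 2 ∧ (ε * (q : ℝ)) ^ i ≤ (yCount E X v i : ℝ)

/-- The set `A(v,X)` of colors available at `v`: those `c` such that no edge `e ∋ v`
has `e \ {v}` entirely colored `c`. -/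
def availSet (E : Finset (Finset V)) {q : ℕ} (X : V → Fin q) (v : V) : Finset (Fin q) :=
  Finset.univ.filter (fun c => ¬ ∃ e ∈ E, v ∈ e ∧ ∀ w ∈ e.erase v, X w = c)

/-- One-step transition probability of the Glauber dynamics: choose `v` uniformly from `V`;
if `A(v,X)` is nonempty recolor `v` with a uniform color from `A(v,X)`, else stay put. -/
def stepProb (E : Finset (Finset V)) {q : ℕ} (X Z : V → Fin q) : ℝ :=
  (Fintype.card V : ℝ)⁻¹ * ∑ v : V,
    if (availSet E X v).Nonempty then
      (if (∀ u : V, u ≠ v → Z u = X u) ∧ Z v ∈ availSet E X v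
        then ((availSet E X v).card : ℝ)⁻¹ else 0)
    else (if Z = X then 1 else 0)

/-- The distribution of the Glauber dynamics after `t` steps, started from
the initial distribution `init`. -/
def glauberDist (E : Finset (Finset V)) {q : ℕ} (init : (V → Fin q) → ℝ) :
    ℕ → (V → Fin q) → ℝ
  | 0 => init
  | t + 1 => fun Z => ∑ X : V → Fin q, glauberDist E init t X * stepProb E X Z

/-- `goodRunDist E k ε X₀ t Z` is the probability that the Glauber dynamics started at `X₀`
satisfies: `X_s` is `ε`-good for all `0 ≤ s ≤ t` and `X_t = Z`. -/
def goodRunDist (E : Finset (Finset V)) (k : ℕ) {q : ℕ} (ε : ℝ) (X₀ : V → Fin q) :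
    ℕ → (V → Fin q) → ℝ
  | 0 => fun X => if X = X₀ ∧ (∀ v : V, ¬ epsBadAt E k ε X v) then 1 else 0
  | t + 1 => fun Z =>
      if (∀ v : V, ¬ epsBadAt E k ε Z v)
        then ∑ X : V → Fin q, goodRunDist E k ε X₀ t X * stepProb E X Z
        else 0

/-! ### The one-step expectation -/

lemma image_update_of_mem {q : ℕ} {f : Finset V} (X : V → Fin q) {w : V} (hw : w ∈ f)
    (c : Fin q) :
    f.image (Function.update X w c) = insert c ((f.erase w).image X) := by
  rw [← Finset.insert_erase hw, Finset.image_insert, Finset.erase_insert_eq_erase,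
    Finset.erase_idem, Function.update_self]
  congr 1
  refine Finset.image_congr fun u hu => ?_
  rw [Function.update_of_ne (Finset.ne_of_mem_erase hu)]

lemma image_update_of_notMem {q : ℕ} {f : Finset V} (X : V → Fin q) {w : V} (hw : w ∉ f)
    (c : Fin q) : f.image (Function.update X w c) = f.image X := by
  refine Finset.image_congr fun u hu => ?_
  rw [Function.update_of_ne]
  rintro rfl
  exact hw hu

lemma stepProb_nonneg (E : Finset (Finset V)) {q : ℕ} (X Z : V → Fin q) :
    0 ≤ stepProb E X Z := by
  unfold stepProb
  refine mul_nonneg (by positivity) (Finset.sum_nonneg fun v _ => ?_)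
  split_ifs <;> positivity

lemma stepProb_expect (E : Finset (Finset V)) {q : ℕ} (X : V → Fin q)
    (hA : ∀ w, (availSet E X w).Nonempty) (F : (V → Fin q) → ℝ) :
    ∑ Z, stepProb E X Z * F Z = (Fintype.card V : ℝ)⁻¹ *
      ∑ w, ((availSet E X w).card : ℝ)⁻¹ *
        ∑ c ∈ availSet E X w, F (Function.update X w c) := by
  unfold stepProb
  simp_rw [mul_assoc, ← Finset.mul_sum, Finset.sum_mul]
  rw [Finset.sum_comm]
  congr 1
  refine Finset.sum_congr rfl fun w _ => ?_
  simp only [hA w, if_true]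
  rw [Finset.mul_sum]
  simp_rw [ite_mul, zero_mul]
  rw [← Finset.sum_filter]
  symm
  refine Finset.sum_bij (fun c _ => Function.update X w c) ?_ ?_ ?_ ?_
  · intro c hc
    simp only [Finset.mem_filter, Finset.mem_univ, true_and, Function.update_self]
    exact ⟨fun u hu => Function.update_of_ne hu _ _, hc⟩
  · intro c _ d _ h
    simpa using congrFun h w
  · intro Z hZ
    simp only [Finset.mem_filter, Finset.mem_univ, true_and] at hZ
    refine ⟨Z w, hZ.2, ?_⟩
    ext u
    by_cases hu : u = w
    · subst hu; simp
    · rw [Function.update_of_ne hu, hZ.1 u hu]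
  · intro c _; rfl

/-- Each blocked color at `v` is witnessed by an edge that is monochromatic off `v`, so at most
`y_{v,1,X}` colors are blocked. -/
lemma card_availSet (E : Finset (Finset V)) {q k : ℕ} (hk : 2 ≤ k)
    (hcard : ∀ e ∈ E, e.card = k) (X : V → Fin q) (v : V) :
    (q : ℝ) - yCount E X v 1 ≤ (availSet E X v).card := by
  have h1 : (Finset.univ \ availSet E X v).card ≤ yCount E X v 1 := by
    have hex : ∀ c ∈ Finset.univ \ availSet E X v,
        ∃ e ∈ E, v ∈ e ∧ ∀ w ∈ e.erase v, X w = c := by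
      intro c hc
      simpa [availSet] using hc
    have himg : ∀ e ∈ E, v ∈ e → ∀ c, (∀ w ∈ e.erase v, X w = c) →
        (e.erase v).image X = {c} := by
      intro e he hv c h
      have hne : (e.erase v).Nonempty := by
        rw [← Finset.card_pos, Finset.card_erase_of_mem hv, hcard e he]; omega
      obtain ⟨w, hw⟩ := hne
      ext d
      simp only [Finset.mem_image, Finset.mem_singleton]
      constructor
      · rintro ⟨u, hu, rfl⟩; exact h u hu
      · rintro rfl; exact ⟨w, hw, h w hw⟩
    choose! e he hv hc using hex
    unfold yCount
    refine Finset.card_le_card_of_injOn e ?_ ?_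
    · intro c hc'
      simp only [Finset.coe_filter, Set.mem_ofPred_eq]
      refine ⟨he c hc', hv c hc', ?_⟩
      rw [himg _ (he c hc') (hv c hc') c (hc c hc'), Finset.card_singleton]
    · intro c hc' d hd' h
      have h1 := himg _ (he c hc') (hv c hc') c (hc c hc')
      have h2 := himg _ (he d hd') (hv d hd') d (hc d hd')
      rw [h, h2] at h1
      exact (Finset.singleton_injective h1).symm
  have h2 := Finset.card_sdiff_add_card_eq_card (Finset.subset_univ (availSet E X v))
  rw [Finset.card_univ, Fintype.card_fin] at h2
  have h3 : q ≤ yCount E X v 1 + (availSet E X v).card := by omega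
  have : (q : ℝ) ≤ yCount E X v 1 + (availSet E X v).card := by exact_mod_cast h3
  linarith

/-! ### The potential of an edge -/

/-- The weight, with `s` steps to go, of an edge `e ∋ v` showing `j` distinct colors on
`e \ {v}`: an upper bound on the chance that it shows at most `i` colors at the end. From level
`i` an edge moves up at rate more than `1/(2n)`, while each step down the levels above `i` has
rate at most `δ`. -/
def pot (i : ℕ) (n δ : ℝ) (s j : ℕ) : ℝ :=
  if j < i then 1 else if j = i then 1 - s / (2 * n) else (δ * s) ^ (j - i)

section pot
variable {i : ℕ} {n δ : ℝ} {s : ℕ}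

lemma pot_lt {j : ℕ} (h : j < i) : pot i n δ s j = 1 := by simp [pot, h]
lemma pot_eq : pot i n δ s i = 1 - s / (2 * n) := by simp [pot]
lemma pot_gt {j : ℕ} (h : i < j) : pot i n δ s j = (δ * s) ^ (j - i) := by
  simp [pot, h.not_gt, h.ne']

lemma pot_nonneg (hn : 0 < n) (hδ : 0 ≤ δ) (hs : (s : ℝ) ≤ n / 10) (j : ℕ) :
    0 ≤ pot i n δ s j := by
  have : (s : ℝ) / (2 * n) ≤ 1 := by rw [div_le_one (by positivity)]; linarith
  unfold pot
  split_ifs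
  · norm_num
  · linarith
  · positivity

lemma pot_le_pow (hn : 0 < n) {j : ℕ} (h : i ≤ j) :
    pot i n δ s j ≤ (δ * s) ^ (j - i) := by
  rcases h.eq_or_lt with rfl | h
  · rw [pot_eq, Nat.sub_self, pow_zero]
    have : 0 ≤ (s : ℝ) / (2 * n) := by positivity
    linarith
  · rw [pot_gt h]

lemma pot_le_one (hn : 0 < n) (hδ : 0 ≤ δ) (hδs : δ * s ≤ 1 / 50) (j : ℕ) :
    pot i n δ s j ≤ 1 := by
  rcases lt_or_ge j i with h | h
  · rw [pot_lt h]
  · exact (pot_le_pow hn h).trans (pow_le_one₀ (by positivity) (by linarith))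

lemma pot_antitone (hn : 0 < n) (hδ : 0 ≤ δ) (hs : (s : ℝ) ≤ n / 10) (hδs : δ * s ≤ 1 / 50) :
    Antitone (pot i n δ s) := by
  refine antitone_nat_of_succ_le fun j => ?_
  rcases lt_trichotomy j i with h | h | h
  · rw [pot_lt h]; exact pot_le_one hn hδ hδs _
  · subst h
    rw [pot_eq, pot_gt (Nat.lt_succ_self j)]
    have : (s : ℝ) / (2 * n) ≤ 1 / 20 := by rw [div_le_iff₀ (by positivity)]; linarith
    simp
    linarith
  · rw [pot_gt h, pot_gt (h.trans (Nat.lt_succ_self j))]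
    exact pow_le_pow_of_le_one (by positivity) (by linarith) (by omega)

end pot

lemma exp_sub_one_le_of_nonneg {x : ℝ} (h0 : 0 ≤ x) (h1 : x ≤ 1) : Real.exp x - 1 ≤ 2 * x := by
  have := Real.abs_exp_sub_one_le (x := x) (by rw [abs_of_nonneg h0]; exact h1)
  rw [abs_of_nonneg h0] at this
  exact (le_abs_self _).trans this

lemma exp_neg_sub_one_le {x : ℝ} (h0 : (9 / 10 : ℝ) ≤ x) : Real.exp (-x) - 1 ≤ -(9 / 20) := by
  have h1 : Real.exp (-x) ≤ Real.exp (-(9 / 10)) := Real.exp_le_exp.2 (by linarith)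
  have h2 : (1 : ℝ) + 9 / 10 ≤ Real.exp (9 / 10) := by
    have := Real.add_one_le_exp (9 / 10 : ℝ); linarith
  have h3 : Real.exp (-(9 / 10 : ℝ)) ≤ 1 / (1 + 9 / 10) := by
    rw [Real.exp_neg, ← one_div]
    exact one_div_le_one_div_of_le (by norm_num) h2
  have h4 : (1 : ℝ) / (1 + 9 / 10) ≤ 11 / 20 := by norm_num
  linarith

/-- Multiplied by `n`, the expected one-step change of an edge's potential `pot i n δ s`
(in exponential form) is at most its change when the number of remaining steps grows by one.
Here `f` plays the role of `e \ {v}`. -/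
lemma edge_drift {q k i s : ℕ} {n δ : ℝ} (hn : 0 < n) (hk : 1 ≤ k)
    (hq : 100 * (k : ℝ) ^ 2 ≤ q) (hδ : δ = 4 * (k : ℝ) ^ 2 / (n * q))
    (hs : (s : ℝ) ≤ n / 10) (f : Finset V) (hfk : f.card ≤ k) (hif : i < f.card)
    (X : V → Fin q) (A : V → Finset (Fin q)) (hA : ∀ w, (q : ℝ) / 2 ≤ (A w).card) :
    ∑ w ∈ f, ((A w).card : ℝ)⁻¹ * ∑ c ∈ A w,
      (Real.exp (pot i n δ s (f.image (Function.update X w c)).card -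
        pot i n δ s (f.image X).card) - 1) ≤
      n * (pot i n δ (s + 1) (f.image X).card - pot i n δ s (f.image X).card) := by
  have hk1 : (1 : ℝ) ≤ k := by exact_mod_cast hk
  have hq0 : (0 : ℝ) < q := by nlinarith
  have hδ0 : 0 ≤ δ := by rw [hδ]; positivity
  have hδs : δ * s ≤ 1 / 50 := by
    rw [hδ, div_mul_eq_mul_div, div_le_iff₀ (by positivity)]
    have h1 : 4 * (k : ℝ) ^ 2 * s ≤ 4 * (k : ℝ) ^ 2 * (n / 10) := by gcongr
    have h2 : 100 * (k : ℝ) ^ 2 * n ≤ q * n := by gcongr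
    nlinarith
  have hanti := pot_antitone (i := i) hn hδ0 hs hδs
  have hnonneg := pot_nonneg (i := i) hn hδ0 hs
  have hle1 := pot_le_one (i := i) hn hδ0 hδs
  set j := (f.image X).card with hj
  set β := pot i n δ s (j - 1) - pot i n δ s j with hβ
  have hβ0 : 0 ≤ β := sub_nonneg.2 (hanti (Nat.sub_le _ _))
  have hβ1 : β ≤ 1 := by have := hle1 (j - 1); have := hnonneg j; linarith
  have hA0 : ∀ w, (0 : ℝ) < (A w).card := fun w => lt_of_lt_of_le (by positivity) (hA w)
  have hS : ∀ w ∈ f, (((f.erase w).image X).card : ℝ) ≤ k := by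
    intro w hw
    have : ((f.erase w).image X).card ≤ k :=
      Finset.card_image_le.trans ((Finset.card_le_card (Finset.erase_subset _ _)).trans hfk)
    exact_mod_cast this
  have hfrac : ∀ w ∈ f, ((A w).card : ℝ)⁻¹ * ((A w).filter
      (fun c => c ∈ (f.erase w).image X)).card ≤ 2 * k / q := by
    intro w hw
    have h1 : (((A w).filter (fun c => c ∈ (f.erase w).image X)).card : ℝ) ≤ k := by
      refine le_trans ?_ (hS w hw)
      exact_mod_cast Finset.card_le_card fun c hc => (Finset.mem_filter.1 hc).2
    have h2 : ((A w).card : ℝ)⁻¹ ≤ 2 / q := by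
      rw [inv_le_comm₀ (hA0 w) (by positivity), inv_div]
      exact hA w
    calc _ ≤ 2 / (q : ℝ) * k := by gcongr
      _ = _ := by ring
  have hjS : ∀ w ∈ f, j ≤ ((f.erase w).image X).card + 1 := by
    intro w hw
    have h1 : f.image X = insert (X w) ((f.erase w).image X) := by
      rw [← Finset.image_insert, Finset.insert_erase hw]
    rw [hj, h1]
    exact Finset.card_insert_le _ _
  have hgen : ∀ w ∈ f, ((A w).card : ℝ)⁻¹ * ∑ c ∈ A w,
      (Real.exp (pot i n δ s (f.image (Function.update X w c)).card -
        pot i n δ s j) - 1) ≤ 4 * k / q * β := by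
    intro w hw
    have h1 : ∑ c ∈ A w, (Real.exp (pot i n δ s (f.image (Function.update X w c)).card -
        pot i n δ s j) - 1) ≤ ∑ c ∈ A w, if c ∈ (f.erase w).image X then 2 * β else 0 := by
      refine Finset.sum_le_sum fun c _ => ?_
      rw [image_update_of_mem X hw]
      have := hjS w hw
      split_ifs with hc
      · rw [Finset.insert_eq_of_mem hc]
        refine le_trans ?_ (exp_sub_one_le_of_nonneg hβ0 hβ1)
        have h2 := hanti (show j - 1 ≤ ((f.erase w).image X).card by omega)
        have h3 : pot i n δ s ((f.erase w).image X).card - pot i n δ s j ≤ β := by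
          rw [hβ]; linarith
        have := Real.exp_le_exp.2 h3
        linarith
      · rw [Finset.card_insert_of_notMem hc]
        have h2 := hanti this
        have := Real.exp_le_one_iff.2 (sub_nonpos.2 h2)
        linarith
    rw [← Finset.sum_filter, Finset.sum_const, nsmul_eq_mul] at h1
    calc _ ≤ ((A w).card : ℝ)⁻¹ * (_ * (2 * β)) :=
          mul_le_mul_of_nonneg_left h1 (inv_nonneg.2 (hA0 w).le)
      _ = (((A w).card : ℝ)⁻¹ * ((A w).filter
      (fun c => c ∈ (f.erase w).image X)).card) * (2 * β) := by ring
      _ ≤ (2 * k / q) * (2 * β) := by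
          exact mul_le_mul_of_nonneg_right (hfrac w hw) (by positivity)
      _ = _ := by ring
  have hfk' : (f.card : ℝ) ≤ k := by exact_mod_cast hfk
  have hgensum := Finset.sum_le_sum hgen
  rw [Finset.sum_const, nsmul_eq_mul] at hgensum
  have hgensum' := hgensum.trans
    (mul_le_mul_of_nonneg_right hfk' (show 0 ≤ 4 * k / q * β by positivity))
  rcases lt_trichotomy j i with h | h | h
  · have hβz : β = 0 := by rw [hβ, pot_lt h, pot_lt (by omega)]; ring
    rw [hβz] at hgensum'
    rw [pot_lt h, pot_lt h] at *
    simpa using hgensum'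
  · have hninj : ∃ w₁ ∈ f, ∃ w₂ ∈ f, X w₁ = X w₂ ∧ w₁ ≠ w₂ := by
      by_contra! hcon
      have : j = f.card := Finset.card_image_of_injOn fun a ha b hb hab => hcon a ha b hb hab
      omega
    obtain ⟨w₁, hw₁, w₂, hw₂, hX, hne⟩ := hninj
    -- Recoloring either of these two vertices almost always adds a color.
    have hrep : ∀ w ∈ f, ∀ w' ∈ f, X w = X w' → w ≠ w' → ((A w).card : ℝ)⁻¹ * ∑ c ∈ A w,
      (Real.exp (pot i n δ s (f.image (Function.update X w c)).card -
        pot i n δ s j) - 1) ≤ -(2 / 5) := by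
      intro w hw w' hw' hXw hww
      have hSj : ((f.erase w).image X).card = j := by
        rw [hj]
        congr 1
        rw [← Finset.insert_erase hw, Finset.image_insert, Finset.erase_insert_eq_erase,
          Finset.erase_idem, Finset.insert_eq_of_mem]
        rw [hXw]
        exact Finset.mem_image_of_mem X (Finset.mem_erase.2 ⟨hww.symm, hw'⟩)
      have h1 : ∑ c ∈ A w, (Real.exp (pot i n δ s (f.image (Function.update X w c)).card -
          pot i n δ s j) - 1) ≤
          ∑ c ∈ A w, (-(9 / 20) + if c ∈ (f.erase w).image X then (9 / 20 : ℝ) else 0) := by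
        refine Finset.sum_le_sum fun c _ => ?_
        rw [image_update_of_mem X hw]
        split_ifs with hc
        · rw [Finset.insert_eq_of_mem hc, hSj]; simp
        · rw [Finset.card_insert_of_notMem hc, hSj, h, pot_eq, pot_gt (Nat.lt_succ_self i)]
          have h3 : (s : ℝ) / (2 * n) ≤ 1 / 20 := by
            rw [div_le_iff₀ (by positivity)]; linarith
          have h4 := exp_neg_sub_one_le (x := 1 - s / (2 * n) - δ * s) (by linarith)
          simp only [Nat.succ_eq_add_one, Nat.add_sub_cancel_left, pow_one]
          rw [show δ * s - (1 - s / (2 * n)) = -(1 - s / (2 * n) - δ * s) by ring]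
          linarith
      rw [Finset.sum_add_distrib, ← Finset.sum_filter, Finset.sum_const, Finset.sum_const,
        nsmul_eq_mul, nsmul_eq_mul] at h1
      have hAne := (hA0 w).ne'
      have h5 : 2 * (k : ℝ) / q ≤ 1 / 50 := by
        rw [div_le_iff₀ hq0]; nlinarith
      have h6 := hfrac w hw
      calc _ ≤ ((A w).card : ℝ)⁻¹ * _ :=
            mul_le_mul_of_nonneg_left h1 (inv_nonneg.2 (hA0 w).le)
        _ = -(9 / 20) + 9 / 20 * (((A w).card : ℝ)⁻¹ * ((A w).filter
              (fun c => c ∈ (f.erase w).image X)).card) := by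
            rw [mul_add, ← mul_assoc, inv_mul_cancel₀ hAne]; ring
        _ ≤ _ := by linarith
    have hcomb : ∀ w ∈ f, ((A w).card : ℝ)⁻¹ * ∑ c ∈ A w,
      (Real.exp (pot i n δ s (f.image (Function.update X w c)).card -
        pot i n δ s j) - 1) ≤ 4 * k / q + ((if w = w₁ then -(2 / 5) else 0) +
          if w = w₂ then -(2 / 5) else 0) := by
      intro w hw
      have hpos : 0 ≤ 4 * (k : ℝ) / q := by positivity
      by_cases h1 : w = w₁
      · subst h1
        have := hrep w hw₁ w₂ hw₂ hX hne
        rw [if_pos rfl, if_neg hne]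
        linarith
      · by_cases h2 : w = w₂
        · subst h2
          have := hrep w hw₂ w₁ hw₁ hX.symm hne.symm
          rw [if_neg h1, if_pos rfl]
          linarith
        · rw [if_neg h1, if_neg h2]
          have := hgen w hw
          have : 4 * (k : ℝ) / q * β ≤ 4 * k / q * 1 := by gcongr
          linarith
    have hsum := Finset.sum_le_sum hcomb
    rw [Finset.sum_add_distrib, Finset.sum_add_distrib, Finset.sum_ite_eq' f w₁,
      Finset.sum_ite_eq' f w₂, if_pos hw₁, if_pos hw₂, Finset.sum_const, nsmul_eq_mul] at hsum
    refine hsum.trans ?_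
    have h7 : (f.card : ℝ) * (4 * k / q) ≤ k * (4 * k / q) := by gcongr
    have h8 : (k : ℝ) * (4 * k / q) ≤ 1 / 25 := by
      rw [mul_div_assoc', div_le_iff₀ hq0]; nlinarith
    rw [h, pot_eq, pot_eq]
    have h9 : n * (1 - ((s + 1 : ℕ) : ℝ) / (2 * n) - (1 - s / (2 * n))) = -(1 / 2) := by
      push_cast; field_simp; ring
    rw [h9]
    linarith
  · refine hgensum'.trans ?_
    have hβle : β ≤ (δ * s) ^ (j - 1 - i) := by
      have := pot_le_pow (δ := δ) (s := s) hn (show i ≤ j - 1 by omega)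
      have := hnonneg j
      rw [hβ]; linarith
    rw [pot_gt h, pot_gt h]
    obtain ⟨m, hm⟩ : ∃ m, j - i = m + 1 := ⟨j - i - 1, by omega⟩
    have hm' : j - 1 - i = m := by omega
    rw [hm'] at hβle
    rw [hm]
    have h1 : (k : ℝ) * (4 * k / q * β) = n * (δ * β) := by
      rw [hδ]; field_simp
    rw [h1]
    refine mul_le_mul_of_nonneg_left ?_ hn.le
    push_cast
    have h2 : (δ * s) ^ m ≤ (δ * (s + 1)) ^ m := by gcongr; linarith
    have h3 : δ * β ≤ δ * (δ * s) ^ m := by gcongr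
    have h4 : δ * (s + 1) * (δ * s) ^ m ≤ δ * (s + 1) * (δ * (s + 1)) ^ m := by gcongr
    rw [pow_succ, pow_succ]
    nlinarith

/-! ### Exponential supermartingale for the killed chain -/

/-- The exponential of the total potential of the edges at `v`. -/
def starPot (E : Finset (Finset V)) {q : ℕ} (v : V) (i : ℕ) (n δ : ℝ) (s : ℕ)
    (X : V → Fin q) : ℝ :=
  Real.exp (∑ e ∈ E.filter (fun e => v ∈ e), pot i n δ s ((e.erase v).image X).card)

/-- The exponential of a sum with at most one nonzero term linearizes. -/
lemma exp_sum_of_subsingleton {α : Type*} (t : Finset α) (d : α → ℝ)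
    (h : ∀ a ∈ t, ∀ b ∈ t, d a ≠ 0 → d b ≠ 0 → a = b) :
    Real.exp (∑ a ∈ t, d a) = 1 + ∑ a ∈ t, (Real.exp (d a) - 1) := by
  by_cases hz : ∀ a ∈ t, d a = 0
  · rw [Finset.sum_eq_zero hz, Finset.sum_eq_zero fun a ha => by rw [hz a ha]; simp]
    simp
  · push Not at hz
    obtain ⟨a, ha, hda⟩ := hz
    have hb : ∀ b ∈ t, b ≠ a → d b = 0 := fun b hb hba => by
      by_contra hdb
      exact hba (h b hb a ha hdb hda)
    rw [Finset.sum_eq_single_of_mem a ha hb,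
      Finset.sum_eq_single_of_mem a ha fun b hbt hba => by rw [hb b hbt hba]; simp]
    ring

/-- One step of the chain from `X` consumes one unit of the remaining time without increasing
the expected exponential potential. As `H` is simple, recoloring a vertex affects at most
one of the sets `e \ {v}`, so the edges at `v` decouple. -/
lemma star_drift {q k i s : ℕ} {n δ : ℝ} (E : Finset (Finset V)) (hn : 0 < n)
    (hnV : n = Fintype.card V) (hi : i + 2 ≤ k)
    (hcard : ∀ e ∈ E, e.card = k)
    (hsimple : ∀ e ∈ E, ∀ f ∈ E, e ≠ f → (e ∩ f).card ≤ 1)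
    (hq : 100 * (k : ℝ) ^ 2 ≤ q) (hδ : δ = 4 * (k : ℝ) ^ 2 / (n * q))
    (hs : (s : ℝ) ≤ n / 10) (v : V) (X : V → Fin q)
    (hA : ∀ w, (q : ℝ) / 2 ≤ (availSet E X w).card) :
    ∑ Z, stepProb E X Z * starPot E v i n δ s Z ≤ starPot E v i n δ (s + 1) X := by
  have hk1 : (1 : ℝ) ≤ k := by exact_mod_cast (by omega : 1 ≤ k)
  have hq0 : (0 : ℝ) < q := by nlinarith
  have hA0 : ∀ w, (0 : ℝ) < (availSet E X w).card :=
    fun w => lt_of_lt_of_le (by positivity) (hA w)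
  rw [stepProb_expect E X (fun w => Finset.card_pos.1 (by exact_mod_cast hA0 w))]
  set N := E.filter (fun e => v ∈ e) with hN
  set D : Finset V → V → Fin q → ℝ := fun e w c =>
    pot i n δ s ((e.erase v).image (Function.update X w c)).card -
      pot i n δ s ((e.erase v).image X).card with hD
  have hD0 : ∀ e w c, w ∉ e.erase v → D e w c = 0 := fun e w c hw => by
    simp only [hD]; rw [image_update_of_notMem X hw, sub_self]
  have hstep : ∀ w c, starPot E v i n δ s (Function.update X w c) =
      starPot E v i n δ s X * (1 + ∑ e ∈ N, (Real.exp (D e w c) - 1)) := by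
    intro w c
    rw [← exp_sum_of_subsingleton, starPot, starPot, ← Real.exp_add, ← Finset.sum_add_distrib]
    · congr 1
      refine Finset.sum_congr rfl fun e _ => ?_
      simp only [hD]; ring
    · intro e he e' he' hne hne'
      have hw : w ∈ e.erase v := by
        by_contra hw; exact hne (hD0 e w c hw)
      have hw' : w ∈ e'.erase v := by
        by_contra hw; exact hne' (hD0 e' w c hw)
      rw [hN, Finset.mem_filter] at he he'
      rw [Finset.mem_erase] at hw hw'
      by_contra hee
      have h1 := hsimple e he.1 e' he'.1 hee
      exact hw.1 (Finset.card_le_one.1 h1 w (Finset.mem_inter.2 ⟨hw.2, hw'.2⟩) v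
        (Finset.mem_inter.2 ⟨he.2, he'.2⟩))
  have hstar0 : 0 < starPot E v i n δ s X := Real.exp_pos _
  have hedge : ∀ e ∈ N, ∑ w, ((availSet E X w).card : ℝ)⁻¹ *
      ∑ c ∈ availSet E X w, (Real.exp (D e w c) - 1) ≤
      n * (pot i n δ (s + 1) ((e.erase v).image X).card -
        pot i n δ s ((e.erase v).image X).card) := by
    intro e he
    rw [hN, Finset.mem_filter] at he
    have hec : (e.erase v).card = k - 1 := by
      rw [Finset.card_erase_of_mem he.2, hcard e he.1]
    rw [← Finset.sum_subset (Finset.subset_univ (e.erase v))]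
    · exact edge_drift hn (by omega) hq hδ hs (e.erase v) (by omega) (by omega) X
        (fun w => availSet E X w) hA
    · intro w _ hw
      rw [Finset.sum_eq_zero fun c _ => by rw [hD0 e w c hw]; simp, mul_zero]
  have hsum := Finset.sum_le_sum hedge
  rw [Finset.sum_comm, ← Finset.mul_sum] at hsum
  have hid : ∀ w, ((availSet E X w).card : ℝ)⁻¹ *
        ∑ c ∈ availSet E X w, starPot E v i n δ s (Function.update X w c) =
      starPot E v i n δ s X * (1 + ∑ e ∈ N, ((availSet E X w).card : ℝ)⁻¹ *
        ∑ c ∈ availSet E X w, (Real.exp (D e w c) - 1)) := by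
    intro w
    have := (hA0 w).ne'
    simp_rw [hstep]
    rw [← Finset.mul_sum, Finset.sum_add_distrib, Finset.sum_comm, ← Finset.mul_sum]
    simp only [Finset.sum_const, nsmul_eq_mul, mul_one]
    field_simp
  simp_rw [hid]
  rw [← Finset.mul_sum, Finset.sum_add_distrib]
  simp only [Finset.sum_const, nsmul_eq_mul, mul_one, Finset.card_univ]
  rw [← hnV]
  calc _ = starPot E v i n δ s X * (1 + n⁻¹ * ∑ w, ∑ e ∈ N, ((availSet E X w).card : ℝ)⁻¹ *
        ∑ c ∈ availSet E X w, (Real.exp (D e w c) - 1)) := by field_simp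
    _ ≤ starPot E v i n δ s X * (1 + n⁻¹ * (n * ∑ e ∈ N,
        (pot i n δ (s + 1) ((e.erase v).image X).card -
        pot i n δ s ((e.erase v).image X).card))) := by gcongr
    _ ≤ starPot E v i n δ s X * Real.exp (∑ e ∈ N,
        (pot i n δ (s + 1) ((e.erase v).image X).card -
        pot i n δ s ((e.erase v).image X).card)) := by
      refine mul_le_mul_of_nonneg_left ?_ hstar0.le
      rw [inv_mul_cancel_left₀ hn.ne', add_comm]
      exact Real.add_one_le_exp _
    _ = _ := by
      rw [starPot, starPot, ← Real.exp_add, ← Finset.sum_add_distrib]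
      congr 1
      refine Finset.sum_congr rfl fun e _ => ?_
      ring

/-- `X` is tame if every vertex sees at most `q/2` edges that are monochromatic off it, so that
at least `q/2` colors are available everywhere. -/
def tame (E : Finset (Finset V)) {q : ℕ} (X : V → Fin q) : Prop :=
  ∀ w, (yCount E X w 1 : ℝ) ≤ q / 2

/-- The law of the Glauber dynamics from `X₀`, killed when it attempts a step from a coloring
that is not tame. -/
def killedDist (E : Finset (Finset V)) {q : ℕ} (X₀ : V → Fin q) : ℕ → (V → Fin q) → ℝ
  | 0 => fun X => if X = X₀ then 1 else 0
  | t + 1 => fun Z => ∑ X, (if tame E X then killedDist E X₀ t X else 0) * stepProb E X Z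

lemma killedDist_nonneg (E : Finset (Finset V)) {q : ℕ} (X₀ : V → Fin q) (t : ℕ)
    (Z : V → Fin q) : 0 ≤ killedDist E X₀ t Z := by
  induction t generalizing Z with
  | zero => simp only [killedDist]; split_ifs <;> norm_num
  | succ t ih =>
    refine Finset.sum_nonneg fun X _ => mul_nonneg ?_ (stepProb_nonneg E X Z)
    split_ifs
    · exact ih X
    · exact le_rfl

lemma killedDist_le_glauberDist (E : Finset (Finset V)) {q : ℕ} (X₀ : V → Fin q) (t : ℕ)
    (Z : V → Fin q) :
    killedDist E X₀ t Z ≤ glauberDist E (fun X => if X = X₀ then (1 : ℝ) else 0) t Z := by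
  induction t generalizing Z with
  | zero => exact le_rfl
  | succ t ih =>
    refine Finset.sum_le_sum fun X _ => mul_le_mul_of_nonneg_right ?_ (stepProb_nonneg E X Z)
    split_ifs
    · exact ih X
    · exact (killedDist_nonneg E X₀ t X).trans (ih X)

lemma tame.avail {E : Finset (Finset V)} {q k : ℕ} (hk : 2 ≤ k)
    (hcard : ∀ e ∈ E, e.card = k) {X : V → Fin q} (hX : tame E X) (w : V) :
    (q : ℝ) / 2 ≤ (availSet E X w).card := by
  have := card_availSet E hk hcard X w
  have := hX w
  linarith

/-- The mass of the killed chain decreases only through the colorings that are not tame. -/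
lemma killedDist_mass {E : Finset (Finset V)} {q k : ℕ} (hk : 2 ≤ k) [Nonempty V]
    (hq : (0 : ℝ) < q) (hcard : ∀ e ∈ E, e.card = k) (X₀ : V → Fin q) (t : ℕ) {η : ℝ}
    (hη : ∀ s < t, ∑ X, (if tame E X then 0 else killedDist E X₀ s X) ≤ η) :
    1 - t * η ≤ ∑ Z, killedDist E X₀ t Z := by
  induction t with
  | zero => simp [killedDist]
  | succ t ih =>
    have h1 := ih fun s hs => hη s (by omega)
    have h2 := hη t (Nat.lt_succ_self t)
    have h3 : ∑ Z, killedDist E X₀ (t + 1) Z =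
        ∑ X, (if tame E X then killedDist E X₀ t X else 0) := by
      simp only [killedDist]
      rw [Finset.sum_comm]
      refine Finset.sum_congr rfl fun X _ => ?_
      rw [← Finset.mul_sum]
      split_ifs with hX
      · have hA0 : ∀ w, (0 : ℝ) < (availSet E X w).card :=
          fun w => lt_of_lt_of_le (by positivity) (hX.avail hk hcard w)
        have h4 := stepProb_expect E X
          (fun w => Finset.card_pos.1 (by exact_mod_cast hA0 w)) (fun _ => 1)
        simp only [mul_one, Finset.sum_const, nsmul_eq_mul] at h4
        rw [h4, Finset.sum_congr rfl fun w _ => inv_mul_cancel₀ (hA0 w).ne']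
        simp
      · simp
    have h5 : ∑ X, (if tame E X then killedDist E X₀ t X else 0) +
        ∑ X, (if tame E X then 0 else killedDist E X₀ t X) = ∑ X, killedDist E X₀ t X := by
      rw [← Finset.sum_add_distrib]
      refine Finset.sum_congr rfl fun X _ => ?_
      split_ifs <;> simp
    rw [h3]
    push_cast
    linarith

/-- The supermartingale property iterated over `t` steps: killing discards the colorings at
which `star_drift` is not available. -/
lemma killed_starPot_le {q k i : ℕ} {n δ : ℝ} (E : Finset (Finset V)) (hn : 0 < n)
    (hnV : n = Fintype.card V) (hi : i + 2 ≤ k)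
    (hcard : ∀ e ∈ E, e.card = k)
    (hsimple : ∀ e ∈ E, ∀ f ∈ E, e ≠ f → (e ∩ f).card ≤ 1)
    (hq : 100 * (k : ℝ) ^ 2 ≤ q) (hδ : δ = 4 * (k : ℝ) ^ 2 / (n * q))
    (v : V) (X₀ : V → Fin q) (t s : ℕ) (hs : ((s + t : ℕ) : ℝ) ≤ n / 10) :
    ∑ Z, killedDist E X₀ t Z * starPot E v i n δ s Z ≤ starPot E v i n δ (s + t) X₀ := by
  induction t generalizing s with
  | zero => simp [killedDist]
  | succ t ih =>
    have hs1 : (s : ℝ) ≤ n / 10 := by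
      refine le_trans ?_ hs
      push_cast
      have : (0 : ℝ) ≤ t := by positivity
      linarith
    have h2 := ih (s + 1) (by convert hs using 2; omega)
    rw [show s + 1 + t = s + (t + 1) by omega] at h2
    refine le_trans ?_ h2
    simp only [killedDist, Finset.sum_mul]
    rw [Finset.sum_comm]
    refine Finset.sum_le_sum fun X _ => ?_
    simp_rw [mul_assoc]
    rw [← Finset.mul_sum]
    have hpos : 0 ≤ killedDist E X₀ t X * starPot E v i n δ (s + 1) X :=
      mul_nonneg (killedDist_nonneg _ _ _ _) (Real.exp_pos _).le
    split_ifs with hX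
    · exact mul_le_mul_of_nonneg_left (star_drift E hn hnV hi hcard hsimple hq hδ hs1 v X
        (hX.avail (by omega) hcard)) (killedDist_nonneg _ _ _ _)
    · simpa using hpos

/-! ### Tail bounds -/

/-- With no time left, the potential at `v` dominates `y_{v,i,X}`, so Markov's inequality turns
a bound on its exponential moment into a tail bound. -/
lemma tail_of_starPot {q i : ℕ} {n δ : ℝ} (E : Finset (Finset V)) (hn : 0 < n) (hδ : 0 ≤ δ)
    (v : V) (κ : (V → Fin q) → ℝ) (hκ : ∀ Z, 0 ≤ κ Z) {M a : ℝ}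
    (hM : ∑ Z, κ Z * starPot E v i n δ 0 Z ≤ Real.exp M) :
    ∑ Z, (if a ≤ (yCount E Z v i : ℝ) then κ Z else 0) ≤ Real.exp (M - a) := by
  have h1 : ∀ Z : V → Fin q, Real.exp a * (if a ≤ (yCount E Z v i : ℝ) then κ Z else 0) ≤
      κ Z * starPot E v i n δ 0 Z := by
    intro Z
    split_ifs with h
    · rw [mul_comm]
      refine mul_le_mul_of_nonneg_left (Real.exp_le_exp.2 (h.trans ?_)) (hκ Z)
      have h2 : (yCount E Z v i : ℝ) = ∑ e ∈ E.filter (fun e => v ∈ e),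
          if ((e.erase v).image Z).card = i then (1 : ℝ) else 0 := by
        rw [Finset.sum_boole, Finset.filter_filter]
        rfl
      rw [h2]
      refine Finset.sum_le_sum fun e _ => ?_
      split_ifs with h3
      · rw [h3, pot_eq]; simp
      · exact pot_nonneg hn hδ (by simp; positivity) _
    · rw [mul_zero]
      exact mul_nonneg (hκ Z) (Real.exp_pos _).le
  have h2 := (Finset.sum_le_sum fun Z (_ : Z ∈ Finset.univ) => h1 Z).trans hM
  rw [← Finset.mul_sum] at h2
  rw [Real.exp_sub, le_div_iff₀ (Real.exp_pos _)]
  linarith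

lemma geom_bound {z : ℝ} (h0 : 0 ≤ z) (h1 : z ≤ 1 / 2) (N : ℕ) :
    ∑ m ∈ Finset.range N, z ^ (m + 1) ≤ 2 * z := by
  induction N with
  | zero => simpa using h0
  | succ N ih =>
    rw [Finset.sum_range_succ']
    have : ∑ m ∈ Finset.range N, z ^ (m + 1 + 1) = z * ∑ m ∈ Finset.range N, z ^ (m + 1) := by
      rw [Finset.mul_sum]
      exact Finset.sum_congr rfl fun m _ => by ring
    rw [this, zero_add, pow_one]
    nlinarith [mul_le_mul_of_nonneg_left ih h0, mul_le_mul_of_nonneg_left h1 h0]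

/-- Starting from `y_j ≤ μ^j` for all levels `j`, the initial potential with `s` steps to go is
below `μ^i` by the fraction `s / (4n)`, up to the contribution `k μ^(i-1)` of the levels
below `i`. -/
lemma starPot_init {q k i s : ℕ} {n δ μ : ℝ} (E : Finset (Finset V)) (hn : 0 < n)
    (hi : 1 ≤ i) (hik : i + 2 ≤ k) (hcard : ∀ e ∈ E, e.card = k)
    (hμ : 1 ≤ μ) (hδ : δ * μ = 2 / (25 * n)) (hs : (s : ℝ) ≤ n / 10)
    (v : V) (X : V → Fin q) (hy : ∀ j, 1 ≤ j → j < k → (yCount E X v j : ℝ) ≤ μ ^ j) :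
    starPot E v i n δ s X ≤ Real.exp (μ ^ i * (1 - s / (4 * n)) + k * μ ^ (i - 1)) := by
  have hδ0 : 0 ≤ δ := by
    have : δ = 2 / (25 * n) / μ := by rw [← hδ]; field_simp
    rw [this]; positivity
  unfold starPot
  rw [Real.exp_le_exp]
  have hmaps : ∀ e ∈ E.filter (fun e => v ∈ e), ((e.erase v).image X).card ∈ Finset.Ico 1 k := by
    intro e he
    rw [Finset.mem_filter] at he
    have h1 : (e.erase v).card = k - 1 := by
      rw [Finset.card_erase_of_mem he.2, hcard e he.1]
    have h2 : ((e.erase v).image X).card ≤ (e.erase v).card := Finset.card_image_le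
    have h3 : ((e.erase v).image X).Nonempty :=
      Finset.Nonempty.image (Finset.card_pos.1 (by omega)) _
    have h4 := Finset.card_pos.2 h3
    rw [Finset.mem_Ico]
    omega
  have hfib : ∑ e ∈ E.filter (fun e => v ∈ e), pot i n δ s ((e.erase v).image X).card =
      ∑ j ∈ Finset.Ico 1 k, (yCount E X v j : ℝ) * pot i n δ s j := by
    rw [← Finset.sum_fiberwise_of_maps_to hmaps]
    refine Finset.sum_congr rfl fun j _ => ?_
    rw [Finset.filter_filter, yCount, ← nsmul_eq_mul, ← Finset.sum_const]
    refine Finset.sum_congr rfl fun e he => ?_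
    rw [(Finset.mem_filter.1 he).2.2]
  rw [hfib]
  have h1 : ∑ j ∈ Finset.Ico 1 k, (yCount E X v j : ℝ) * pot i n δ s j ≤
      ∑ j ∈ Finset.Ico 1 k, μ ^ j * pot i n δ s j := by
    refine Finset.sum_le_sum fun j hj => ?_
    rw [Finset.mem_Ico] at hj
    exact mul_le_mul_of_nonneg_right (hy j hj.1 hj.2) (pot_nonneg hn hδ0 hs j)
  refine h1.trans ?_
  rw [← Finset.sum_Ico_consecutive _ hi (by omega : i ≤ k),
    Finset.sum_eq_sum_Ico_succ_bot (by omega : i < k)]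
  have hlow : ∑ j ∈ Finset.Ico 1 i, μ ^ j * pot i n δ s j ≤ k * μ ^ (i - 1) := by
    have h2 : ∀ j ∈ Finset.Ico 1 i, μ ^ j * pot i n δ s j ≤ μ ^ (i - 1) := by
      intro j hj
      rw [Finset.mem_Ico] at hj
      rw [pot_lt hj.2, mul_one]
      exact pow_le_pow_right₀ hμ (by omega)
    have h3 := Finset.sum_le_sum h2
    rw [Finset.sum_const, nsmul_eq_mul, Nat.card_Ico] at h3
    refine h3.trans ?_
    have h4 : ((i - 1 : ℕ) : ℝ) ≤ k := by exact_mod_cast (by omega : i - 1 ≤ k)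
    gcongr
  have hμi : (0 : ℝ) < μ ^ i := by positivity
  set z : ℝ := 2 / 25 * (s / n) with hz
  have hsn : (s : ℝ) / n ≤ 1 / 10 := by rw [div_le_iff₀ hn]; linarith
  have hz0 : 0 ≤ z := by positivity
  have hhigh : ∑ j ∈ Finset.Ico (i + 1) k, μ ^ j * pot i n δ s j ≤ μ ^ i * (2 * z) := by
    have h2 : ∑ j ∈ Finset.Ico (i + 1) k, μ ^ j * pot i n δ s j =
        μ ^ i * ∑ m ∈ Finset.range (k - (i + 1)), z ^ (m + 1) := by
      rw [Finset.sum_Ico_eq_sum_range, Finset.mul_sum]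
      refine Finset.sum_congr rfl fun m _ => ?_
      rw [pot_gt (by omega), show i + 1 + m - i = m + 1 by omega,
        show i + 1 + m = i + (m + 1) by omega, pow_add, mul_assoc, ← mul_pow]
      congr 2
      rw [hz, show μ * (δ * s) = (δ * μ) * s by ring, hδ]
      field_simp
    rw [h2]
    exact mul_le_mul_of_nonneg_left (geom_bound hz0 (by rw [hz]; linarith) _) hμi.le
  rw [pot_eq]
  have h5 : (s : ℝ) / (2 * n) = s / n / 2 := by field_simp
  have h6 : (s : ℝ) / (4 * n) = s / n / 4 := by field_simp
  have h7 : 0 ≤ (s : ℝ) / n := by positivity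
  have h8 : μ ^ i * (1 - s / (2 * n)) + μ ^ i * (2 * z) ≤ μ ^ i * (1 - s / (4 * n)) := by
    rw [← mul_add]
    refine mul_le_mul_of_nonneg_left ?_ hμi.le
    rw [h5, h6, hz]; linarith
  linarith

/-- The tail bound for `y_{v,i}` at time `s` under the killed chain. -/
lemma tail_at {q k i s : ℕ} {n μ : ℝ} (E : Finset (Finset V)) (hn : 0 < n)
    (hnV : n = Fintype.card V) (hi : 1 ≤ i) (hik : i + 2 ≤ k) (hcard : ∀ e ∈ E, e.card = k)
    (hsimple : ∀ e ∈ E, ∀ f ∈ E, e ≠ f → (e ∩ f).card ≤ 1)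
    (hq : 100 * (k : ℝ) ^ 2 ≤ q) (hμ : 1 ≤ μ) (hμq : μ = 1 / (50 * (k : ℝ) ^ 2) * q)
    (hs : (s : ℝ) ≤ n / 10) (v : V) (X₀ : V → Fin q)
    (hy : ∀ j, 1 ≤ j → j < k → (yCount E X₀ v j : ℝ) ≤ μ ^ j) (a : ℝ) :
    ∑ Z, (if a ≤ (yCount E Z v i : ℝ) then killedDist E X₀ s Z else 0) ≤
      Real.exp (μ ^ i * (1 - s / (4 * n)) + k * μ ^ (i - 1) - a) := by
  have hk0 : (0 : ℝ) < k := by exact_mod_cast (by omega : 0 < k)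
  have hq0 : (0 : ℝ) < q := lt_of_lt_of_le (by positivity) hq
  have h1 := killed_starPot_le E hn hnV hik hcard hsimple hq rfl v X₀ s 0
    (by rw [zero_add]; exact hs)
  rw [zero_add] at h1
  refine tail_of_starPot E hn (by positivity) v _ (killedDist_nonneg E X₀ s)
    (h1.trans (starPot_init E hn hi hik hcard hμ ?_ hs v X₀ hy))
  rw [hμq]
  field_simp
  norm_num

/-! ### Union bound over times, vertices and levels -/

/-- Union bound over the vertices at which tameness can fail. -/
lemma escape_mass {q : ℕ} (E : Finset (Finset V)) (X₀ : V → Fin q) (s : ℕ) {η : ℝ}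
    (h : ∀ v, ∑ X, (if (q : ℝ) / 2 ≤ (yCount E X v 1 : ℝ) then killedDist E X₀ s X else 0) ≤ η) :
    ∑ X, (if tame E X then 0 else killedDist E X₀ s X) ≤ Fintype.card V * η := by
  have h1 : ∑ X, (if tame E X then 0 else killedDist E X₀ s X) ≤
      ∑ v, ∑ X, (if (q : ℝ) / 2 ≤ (yCount E X v 1 : ℝ) then killedDist E X₀ s X else 0) := by
    rw [Finset.sum_comm]
    refine Finset.sum_le_sum fun X _ => ?_
    have hnn : ∀ v ∈ Finset.univ, (0 : ℝ) ≤
        if (q : ℝ) / 2 ≤ (yCount E X v 1 : ℝ) then killedDist E X₀ s X else 0 := by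
      intro v _
      split_ifs
      · exact killedDist_nonneg _ _ _ _
      · exact le_rfl
    split_ifs with hX
    · exact Finset.sum_nonneg hnn
    · unfold tame at hX
      push Not at hX
      obtain ⟨w, hw⟩ := hX
      refine le_trans ?_ (Finset.single_le_sum hnn (Finset.mem_univ w))
      rw [if_pos hw.le]
  refine h1.trans ((Finset.sum_le_sum fun v _ => h v).trans ?_)
  rw [Finset.sum_const, nsmul_eq_mul, Finset.card_univ]

/-- Union bound over the vertices and levels at which `ε`-goodness can fail. -/
lemma bad_mass {q k : ℕ} {ε μ η : ℝ} (E : Finset (Finset V)) (hμ : μ = ε * q)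
    (X₀ : V → Fin q) (t₀ : ℕ)
    (h : ∀ v i, 1 ≤ i → i + 2 ≤ k →
      ∑ Z, (if μ ^ i ≤ (yCount E Z v i : ℝ) then killedDist E X₀ t₀ Z else 0) ≤ Real.exp η) :
    ∑ Z, (if (∀ v : V, ¬ epsBadAt E k ε Z v) then 0
      else killedDist E X₀ t₀ Z) ≤ Fintype.card V * (k * Real.exp η) := by
  have h1 : ∑ Z, (if (∀ v : V, ¬ epsBadAt E k ε Z v) then 0
      else killedDist E X₀ t₀ Z) ≤ ∑ v, ∑ i ∈ Finset.Ico 1 (k - 1),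
      ∑ Z, (if μ ^ i ≤ (yCount E Z v i : ℝ) then killedDist E X₀ t₀ Z else 0) := by
    simp_rw [Finset.sum_comm (s := Finset.Ico 1 (k - 1))]
    rw [Finset.sum_comm]
    refine Finset.sum_le_sum fun Z _ => ?_
    have hnn : ∀ v i, (0 : ℝ) ≤
        if μ ^ i ≤ (yCount E Z v i : ℝ) then killedDist E X₀ t₀ Z else 0 := by
      intro v i
      split_ifs
      · exact killedDist_nonneg _ _ _ _
      · exact le_rfl
    split_ifs with hZ
    · exact Finset.sum_nonneg fun v _ => Finset.sum_nonneg fun i _ => hnn v i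
    · push Not at hZ
      obtain ⟨v, i, hi1, hi2, hi3⟩ := hZ
      refine le_trans ?_ (Finset.single_le_sum
        (fun v _ => Finset.sum_nonneg fun i _ => hnn v i) (Finset.mem_univ v))
      refine le_trans ?_ (Finset.single_le_sum (fun i _ => hnn v i)
        (Finset.mem_Ico.2 ⟨hi1, (by omega : i < k - 1)⟩))
      rw [if_pos (hμ ▸ hi3)]
  have h2 : ∀ v ∈ (Finset.univ : Finset V), ∑ i ∈ Finset.Ico 1 (k - 1),
      ∑ Z, (if μ ^ i ≤ (yCount E Z v i : ℝ) then killedDist E X₀ t₀ Z else 0) ≤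
      k * Real.exp η := by
    intro v _
    have h3 : ∀ i ∈ Finset.Ico 1 (k - 1),
        ∑ Z, (if μ ^ i ≤ (yCount E Z v i : ℝ) then killedDist E X₀ t₀ Z else 0) ≤
        Real.exp η := by
      intro i hi
      rw [Finset.mem_Ico] at hi
      exact h v i hi.1 (by omega)
    refine (Finset.sum_le_sum h3).trans ?_
    rw [Finset.sum_const, nsmul_eq_mul, Nat.card_Ico]
    refine mul_le_mul_of_nonneg_right ?_ (Real.exp_pos _).le
    exact_mod_cast (by omega : k - 1 - 1 ≤ k)
  refine h1.trans ((Finset.sum_le_sum h2).trans ?_)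
  rw [Finset.sum_const, nsmul_eq_mul, Finset.card_univ]

lemma le_pow_of_rpow_le {Δ k : ℕ} {μ : ℝ} (hk : 2 ≤ k)
    (h : (Δ : ℝ) ^ ((1 : ℝ) / ((k : ℝ) - 1)) ≤ μ) : (Δ : ℝ) ≤ μ ^ (k - 1) := by
  have hk2 : (2 : ℝ) ≤ k := by exact_mod_cast hk
  calc (Δ : ℝ) = ((Δ : ℝ) ^ ((1 : ℝ) / ((k : ℝ) - 1))) ^ (k - 1) := by
        rw [← Real.rpow_natCast, ← Real.rpow_mul (by positivity), Nat.cast_sub (by omega),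
          Nat.cast_one, one_div_mul_cancel (by linarith), Real.rpow_one]
    _ ≤ _ := by gcongr

lemma union_cost {n t k x : ℝ} (hn : 72 ≤ n) (ht : t ≤ n) (hkn : k ≤ n)
    (hx : 30 * Real.log n ≤ x) :
    t * (n * Real.exp (-x)) + n * (k * Real.exp (-x)) ≤ Real.exp (-(x / 2)) := by
  have hn0 : 0 < n := by linarith
  have h1 : t * n + n * k ≤ n ^ 3 := by
    have h2 : t * n ≤ n * n := by gcongr
    have h3 : n * k ≤ n * n := by gcongr
    have h4 : 2 * (n * n) ≤ n * (n * n) := by gcongr; linarith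
    nlinarith
  have hlog : 0 ≤ Real.log n := Real.log_nonneg (by linarith)
  have h5 : n ^ 3 = Real.exp (3 * Real.log n) := by
    rw [mul_comm, Real.exp_mul, Real.exp_log hn0]; norm_cast
  calc _ = (t * n + n * k) * Real.exp (-x) := by ring
    _ ≤ n ^ 3 * Real.exp (-x) := by gcongr
    _ = Real.exp (3 * Real.log n + -x) := by rw [h5, Real.exp_add]
    _ ≤ _ := by
      rw [Real.exp_le_exp]
      linarith

set_option maxHeartbeats 1000000 in
/-- **Lemma 2 (goodness at time `t₀`).** There are constants `C_k > 0` and `c > 0` depending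
only on `k` such that under the hypotheses of the main theorem, with `ε = 1/(50k²)`,
`μ₁ = εq` and `t₀ = ⌊n/(4k²e)⌋`: if the Glauber dynamics is started from any fixed
`ε`-good coloring `X₀`, then `X_{t₀}` is `ε`-good with probability at least `1 - e^{-c μ₁}`. -/
theorem good_at_t0 :
    ∀ k : ℕ, 3 ≤ k → ∃ C c : ℝ, 0 < C ∧ 0 < c ∧
      ∀ (V : Type) [Fintype V] [DecidableEq V], Nonempty V →
        ∀ (E : Finset (Finset V)) (q Δ : ℕ),
          (∀ e ∈ E, e.card = k) →
          (∀ e ∈ E, ∀ f ∈ E, e ≠ f → (e ∩ f).card ≤ 1) →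
          (∀ v : V, (E.filter (fun e => v ∈ e)).card ≤ Δ) →
          q ≤ 2 * Δ →
          C * Real.log (Fintype.card V) ≤ (q : ℝ) →
          500 * (k : ℝ) ^ 3 * (Δ : ℝ) ^ ((1 : ℝ) / ((k : ℝ) - 1)) ≤ (q : ℝ) →
          ∀ X₀ : V → Fin q,
            (∀ v : V, ¬ epsBadAt E k (1 / (50 * (k : ℝ) ^ 2)) X₀ v) →
            1 - Real.exp (-(c * ((1 / (50 * (k : ℝ) ^ 2)) * (q : ℝ)))) ≤
              ∑ Z : V → Fin q,
                (if (∀ v : V, ¬ epsBadAt E k (1 / (50 * (k : ℝ) ^ 2)) Z v)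
                  then glauberDist E (fun X => if X = X₀ then (1 : ℝ) else 0)
                    (Nat.floor ((Fintype.card V : ℝ) / (4 * (k : ℝ) ^ 2 * Real.exp 1))) Z
                  else 0) := by
  intro k hk
  have hk3 : (3 : ℝ) ≤ k := by exact_mod_cast hk
  refine ⟨100000 * (k : ℝ) ^ 5, 1 / (384 * (k : ℝ) ^ 2), by positivity, by positivity, ?_⟩
  intro V _ _ _ E q Δ hcard hsimple hdeg _ hlog hqΔ X₀ hX₀
  set t₀ := Nat.floor ((Fintype.card V : ℝ) / (4 * (k : ℝ) ^ 2 * Real.exp 1)) with ht₀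
  set n : ℝ := (Fintype.card V : ℝ) with hnV
  set μ : ℝ := 1 / (50 * (k : ℝ) ^ 2) * q with hμq
  have hn : 0 < n := by rw [hnV]; exact_mod_cast Fintype.card_pos
  have hexp2 : (2 : ℝ) ≤ Real.exp 1 := by have := Real.add_one_le_exp (1 : ℝ); linarith
  have hexp3 : Real.exp 1 ≤ 3 := by have := Real.exp_one_lt_d9; linarith
  have hk2 : (9 : ℝ) ≤ (k : ℝ) ^ 2 := by nlinarith
  have hden : (72 : ℝ) ≤ 4 * (k : ℝ) ^ 2 * Real.exp 1 := by nlinarith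
  rcases Nat.eq_zero_or_pos t₀ with h0 | hpos
  · -- With fewer than `4k²e` vertices no step is taken.
    rw [h0]
    have h1 : ∑ Z : V → Fin q, (if (∀ v : V, ¬ epsBadAt E k (1 / (50 * (k : ℝ) ^ 2)) Z v)
        then glauberDist E (fun X => if X = X₀ then (1 : ℝ) else 0) 0 Z else 0) = 1 := by
      rw [Finset.sum_eq_single X₀]
      · simp only [glauberDist, if_true]
        rw [if_pos hX₀]
      · intro Z _ hZ
        simp [glauberDist, hZ]
      · simp
    rw [h1]
    have := Real.exp_pos (-(1 / (384 * (k : ℝ) ^ 2) * μ))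
    linarith
  -- From here on `t₀ ≥ 1`, so `n` is large in terms of `k`.
  have ht1 : (1 : ℝ) ≤ t₀ := by exact_mod_cast hpos
  have htle : (t₀ : ℝ) ≤ n / (4 * (k : ℝ) ^ 2 * Real.exp 1) := Nat.floor_le (by positivity)
  have htlt : n / (4 * (k : ℝ) ^ 2 * Real.exp 1) < t₀ + 1 := Nat.lt_floor_add_one _
  have hnk : 4 * (k : ℝ) ^ 2 * Real.exp 1 ≤ n := by
    have := ht1.trans htle
    rwa [one_le_div (by positivity)] at this
  have hnk' : (k : ℝ) ≤ n := by nlinarith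
  have hn72 : (72 : ℝ) ≤ n := hden.trans hnk
  have htn : (t₀ : ℝ) ≤ n / 10 := by
    refine htle.trans (div_le_div_of_nonneg_left hn.le (by norm_num) (by linarith))
  have hlogn : 1 ≤ Real.log n := by
    rw [Real.le_log_iff_exp_le hn]; linarith
  have htlow : 1 / (96 * (k : ℝ) ^ 2) ≤ t₀ / (4 * n) := by
    have h1 : n / (12 * (k : ℝ) ^ 2) ≤ n / (4 * (k : ℝ) ^ 2 * Real.exp 1) :=
      div_le_div_of_nonneg_left hn.le (by positivity) (by nlinarith)
    have h2 : n / (12 * (k : ℝ) ^ 2) ≤ 2 * t₀ := by linarith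
    rw [div_le_iff₀ (by positivity)] at h2
    rw [div_le_div_iff₀ (by positivity) (by positivity)]
    linarith
  have hμlog : 2000 * (k : ℝ) ^ 3 * Real.log n ≤ μ := by
    rw [hμq, div_mul_eq_mul_div, le_div_iff₀ (by positivity)]
    calc _ = 100000 * (k : ℝ) ^ 5 * Real.log n := by ring
      _ ≤ _ := by rw [one_mul]; exact hlog
  have hμbig : 2000 * (k : ℝ) ^ 3 ≤ μ := le_trans (le_mul_of_one_le_right (by positivity) hlogn) hμlog
  have hkcube : (9 : ℝ) * k ≤ (k : ℝ) ^ 3 := by nlinarith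
  have hμk : (k : ℝ) ≤ μ := by linarith
  have hμ1 : 1 ≤ μ := by linarith
  have hqμ : (q : ℝ) = 50 * (k : ℝ) ^ 2 * μ := by rw [hμq]; field_simp
  have hq100 : 100 * (k : ℝ) ^ 2 ≤ q := by rw [hqμ]; nlinarith
  have hq0 : (0 : ℝ) < q := by linarith
  have hΔ : (Δ : ℝ) ≤ μ ^ (k - 1) := by
    have h1 : 0 ≤ (Δ : ℝ) ^ ((1 : ℝ) / ((k : ℝ) - 1)) := by positivity
    rw [hqμ] at hqΔ
    have h2 : 50 * (k : ℝ) ^ 2 * (10 * k * (Δ : ℝ) ^ ((1 : ℝ) / ((k : ℝ) - 1))) ≤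
        50 * (k : ℝ) ^ 2 * μ := by linarith
    have h3 := le_of_mul_le_mul_left h2 (by positivity)
    exact le_pow_of_rpow_le (by omega) (by nlinarith)
  have hy : ∀ v j, 1 ≤ j → j < k → (yCount E X₀ v j : ℝ) ≤ μ ^ j := by
    intro v j hj1 hjk
    rcases Nat.lt_or_ge j (k - 1) with h | h
    · have := hX₀ v
      unfold epsBadAt at this
      push Not at this
      exact (this j hj1 (by omega)).le
    · obtain rfl : j = k - 1 := by omega
      refine le_trans ?_ hΔ
      refine le_trans ?_ (Nat.cast_le.2 (hdeg v))
      unfold yCount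
      refine Nat.cast_le.2 (Finset.card_le_card fun e he => ?_)
      rw [Finset.mem_filter] at he ⊢
      exact ⟨he.1, he.2.1⟩
  set β : ℝ := 1 / (192 * (k : ℝ) ^ 2) with hβ
  have hβ0 : 0 < β := by positivity
  have hβ1 : β ≤ 1 := by rw [hβ, div_le_one (by positivity)]; linarith
  have hβμ : 10 * k * Real.log n ≤ β * μ := by
    rw [hβ, div_mul_eq_mul_div, le_div_iff₀ (by positivity), one_mul]
    refine le_trans ?_ hμlog
    have : 0 ≤ (k : ℝ) ^ 3 * Real.log n := by positivity
    nlinarith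
  have hβμk : (k : ℝ) ≤ β * μ := by nlinarith
  -- Here the `50k²/2` in `q/2 = 25k²μ` leaves ample room above the initial `y_{v,1} ≤ μ`.
  have hη : ∀ s < t₀, ∑ X, (if tame E X then 0 else killedDist E X₀ s X) ≤
      n * Real.exp (-(β * μ)) := by
    intro s hs
    have hsn : (s : ℝ) ≤ n / 10 := le_trans (by exact_mod_cast hs.le) htn
    refine escape_mass E X₀ s fun v => ?_
    refine (tail_at E hn hnV le_rfl (by omega) hcard hsimple hq100 hμ1 hμq hsn v X₀
      (hy v) (q / 2)).trans (Real.exp_le_exp.2 ?_)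
    have h3 : 0 ≤ (s : ℝ) / (4 * n) := by positivity
    have h4 : μ ^ 1 * (1 - s / (4 * n)) ≤ μ := by
      rw [pow_one]
      exact mul_le_of_le_one_right (by linarith) (by linarith)
    have h5 : (q : ℝ) / 2 = 25 * (k : ℝ) ^ 2 * μ := by rw [hqμ]; ring
    have h6 : 9 * μ ≤ (k : ℝ) ^ 2 * μ := by gcongr
    have h7 : β * μ ≤ 1 * μ := by gcongr
    rw [Nat.sub_self, pow_zero, mul_one]
    linarith
  have hmass := killedDist_mass (by omega) hq0 hcard X₀ t₀ hη
  have hbad : ∑ Z, (if (∀ v : V, ¬ epsBadAt E k (1 / (50 * (k : ℝ) ^ 2)) Z v) then 0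
      else killedDist E X₀ t₀ Z) ≤ n * (k * Real.exp (-(β * μ))) := by
    refine bad_mass E hμq X₀ t₀ fun v i hi hik => ?_
    refine (tail_at E hn hnV hi hik hcard hsimple hq100 hμ1 hμq htn v X₀
      (hy v) (μ ^ i)).trans (Real.exp_le_exp.2 ?_)
    obtain ⟨m, rfl⟩ : ∃ m, i = m + 1 := ⟨i - 1, by omega⟩
    rw [Nat.add_sub_cancel]
    -- The guaranteed loss is `2β μ^i`; the levels below `i` cost at most half of it.
    have h4 : 2 * β ≤ t₀ / (4 * n) := by
      refine le_trans (le_of_eq ?_) htlow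
      rw [hβ]; field_simp; norm_num
    have h5 : 1 ≤ μ ^ m := one_le_pow₀ hμ1
    have h6 : μ ^ (m + 1) * (2 * β) ≤ μ ^ (m + 1) * (t₀ / (4 * n)) := by gcongr
    have h7 : k * μ ^ m ≤ β * μ * μ ^ m := by gcongr
    have h8 : β * μ * 1 ≤ β * μ * μ ^ m := by gcongr
    rw [pow_succ] at h6 ⊢
    linarith
  have hsplit : ∑ Z, killedDist E X₀ t₀ Z ≤
      ∑ Z, (if (∀ v : V, ¬ epsBadAt E k (1 / (50 * (k : ℝ) ^ 2)) Z v)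
        then glauberDist E (fun X => if X = X₀ then (1 : ℝ) else 0) t₀ Z else 0) +
      ∑ Z, (if (∀ v : V, ¬ epsBadAt E k (1 / (50 * (k : ℝ) ^ 2)) Z v) then 0
        else killedDist E X₀ t₀ Z) := by
    rw [← Finset.sum_add_distrib]
    refine Finset.sum_le_sum fun Z _ => ?_
    split_ifs
    · have := killedDist_le_glauberDist E X₀ t₀ Z
      linarith
    · linarith
  -- The union bound costs a factor `n³`, which `q ≥ C log n` absorbs into the exponential.
  have hunion := union_cost hn72 (by linarith : (t₀ : ℝ) ≤ n) hnk'
    (show 30 * Real.log n ≤ β * μ by nlinarith)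
  have hc : 1 / (384 * (k : ℝ) ^ 2) * μ = β * μ / 2 := by
    rw [hβ]; field_simp; norm_num
  rw [hc]
  linarith
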